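/- Let q be a prime power, and let n, k, d, i be natural numbers with n > k ≥ 1 and d ≥ 2i + 1 ≥ 3. If there exists a systematic (n,k,q) code C ⊆ (F_q)^n with minimum Hamming distance at least d, then there exists an injective map from the set A = { v ∈ (F_q)^k : w(v) = i } into the set B = { u ∈ (F_q)^{n−k} : w(u) ≥ d − i }. -/

import Mathlib

/-!
Move the codeword over the zero message to the zero word by permuting the alphabet in each check
coordinate; this changes no distance. A message of weight `w` then lies at distance `w` from the
zero message, so its check part has weight at least `d - w`. Two messages of weight at most `i` are
at distance at most `2 * i < d` from each other, so they cannot have the same check part.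
-/

/-- Translation by `-u` in a form that makes sense for alphabets that carry no addition: in each
coordinate `j`, swap the letters `u j` and `0`. -/
def recenter {κ : Type*} {β : κ → Type*} [∀ j, Zero (β j)] [∀ j, DecidableEq (β j)]
    (u x : ∀ j, β j) (j : κ) : β j :=
  Equiv.swap (u j) 0 (x j)

/-- The words `(v, r v)`, for `v` a message, form a systematic code of minimum distance at least
`d`. The check part `r v` may use other alphabets than `v`. -/
def IsRedundancyMap {ι κ : Type*} {α : ι → Type*} {β : κ → Type*} [Fintype ι] [Fintype κ]
    [∀ i, DecidableEq (α i)] [∀ j, DecidableEq (β j)] (d : ℕ)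
    (r : (∀ i, α i) → ∀ j, β j) : Prop :=
  Pairwise fun v w => d ≤ hammingDist v w + hammingDist (r v) (r w)

section Recenter

variable {κ : Type*} {β : κ → Type*} [∀ j, Zero (β j)] [∀ j, DecidableEq (β j)]

theorem recenter_self (u : ∀ j, β j) : recenter u u = 0 :=
  funext fun j => Equiv.swap_apply_left (u j) 0

theorem hammingDist_recenter [Fintype κ] (u x y : ∀ j, β j) :
    hammingDist (recenter u x) (recenter u y) = hammingDist x y :=
  hammingDist_comp (fun j => Equiv.swap (u j) 0) fun j => (Equiv.swap (u j) 0).injective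

end Recenter

namespace IsRedundancyMap

variable {ι κ : Type*} {α : ι → Type*} {β : κ → Type*} [Fintype ι] [Fintype κ]
  [∀ i, DecidableEq (α i)] [∀ j, DecidableEq (β j)] {d : ℕ} {r : (∀ i, α i) → ∀ j, β j}

theorem recenter_comp [∀ j, Zero (β j)] (hr : IsRedundancyMap d r) (u : ∀ j, β j) :
    IsRedundancyMap d (recenter u ∘ r) := by
  intro v w hvw
  simpa only [Function.comp_apply, hammingDist_recenter] using hr hvw

theorem injOn_hammingDist_le (hr : IsRedundancyMap d r) {t : ℕ} (ht : 2 * t < d)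
    (u : ∀ i, α i) : Set.InjOn r {v | hammingDist v u ≤ t} := by
  intro v (hv : hammingDist v u ≤ t) w (hw : hammingDist w u ≤ t) hrvw
  by_contra hvw
  have hsep : d ≤ hammingDist v w := by simpa [hrvw] using hr hvw
  have htri : hammingDist v w ≤ hammingDist v u + hammingDist w u :=
    hammingDist_triangle_right v w u
  omega

theorem le_hammingNorm_add [∀ i, Zero (α i)] [∀ j, Zero (β j)] (hr : IsRedundancyMap d r)
    (hr0 : r 0 = 0) {v : ∀ i, α i} (hv : v ≠ 0) : d ≤ hammingNorm v + hammingNorm (r v) := by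
  simpa only [hr0, hammingDist_zero_right] using hr hv

end IsRedundancyMap

section Code

variable {ι κ ν F : Type*} [Fintype ι] [Fintype κ] [Fintype ν] [DecidableEq F]

theorem hammingDist_eq_add_of_sum_equiv (e : ι ⊕ κ ≃ ν) (x y : ν → F) :
    hammingDist x y =
      hammingDist (fun i => x (e (.inl i))) (fun i => y (e (.inl i))) +
        hammingDist (fun j => x (e (.inr j))) (fun j => y (e (.inr j))) := by
  simp only [hammingDist, Finset.card_filter, ← e.sum_comp, Fintype.sum_sum_type]

theorem exists_isRedundancyMap_of_surjOn {d : ℕ} {C : Set (ν → F)} (e : ι ⊕ κ ≃ ν)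
    (hsys : Set.SurjOn (fun c i => c (e (.inl i))) C Set.univ)
    (hmin : C.Pairwise fun c c' => d ≤ hammingDist c c') :
    ∃ r : (ι → F) → κ → F, IsRedundancyMap d r := by
  choose c hcC hc using fun v : ι → F => hsys (Set.mem_univ v)
  refine ⟨fun v j => c v (e (.inr j)), fun v w hvw => ?_⟩
  have hne : c v ≠ c w := fun h => hvw (by rw [← hc v, ← hc w, h])
  beta_reduce at hc
  have hdist := hammingDist_eq_add_of_sum_equiv e (c v) (c w)
  rw [hc, hc] at hdist
  exact (hmin (hcC v) (hcC w) hne).trans_eq hdist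

theorem exists_injection_of_systematic_general [Zero F] {d i : ℕ} (hd : 2 * i < d)
    {C : Set (ν → F)} (e : ι ⊕ κ ≃ ν)
    (hsys : Set.SurjOn (fun c i => c (e (.inl i))) C Set.univ)
    (hmin : C.Pairwise fun c c' => d ≤ hammingDist c c') :
    ∃ f : {v : ι → F // v ≠ 0 ∧ hammingNorm v ≤ i} → {u : κ → F // d - i ≤ hammingNorm u},
      Function.Injective f := by
  obtain ⟨r, hr⟩ := exists_isRedundancyMap_of_surjOn e hsys hmin
  let s := recenter (r 0) ∘ r
  have hs : IsRedundancyMap d s := hr.recenter_comp (r 0)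
  have hs0 : s 0 = 0 := recenter_self (r 0)
  have hweight (v : {v : ι → F // v ≠ 0 ∧ hammingNorm v ≤ i}) : d - i ≤ hammingNorm (s v) := by
    rw [Nat.sub_le_iff_le_add']
    calc
      d ≤ hammingNorm v.1 + hammingNorm (s v) := hs.le_hammingNorm_add hs0 v.2.1
      _ ≤ i + hammingNorm (s v) := Nat.add_le_add_right v.2.2 _
  have hinj : Set.InjOn s {v | hammingNorm v ≤ i} := by
    simpa only [hammingDist_zero_right] using hs.injOn_hammingDist_le hd 0
  exact ⟨fun v => ⟨s v, hweight v⟩, fun v w hvw =>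
    Subtype.ext (hinj v.2.2 w.2.2 (congrArg Subtype.val hvw))⟩

end Code

/-- Let `q` be a prime power, `n > k ≥ 1`, `d ≥ 2i + 1 ≥ 3`. If there exists a
systematic `(n,k,q)` code `C ⊆ (F_q)^n` with minimum Hamming distance at least
`d`, then there is an injective map from
`A = { v ∈ (F_q)^k : w(v) = i }` into `B = { u ∈ (F_q)^{n−k} : w(u) ≥ d − i }`. -/
theorem exists_injection_of_systematic (q n k d i : ℕ) (hq : IsPrimePow q)
    (hk : 1 ≤ k) (hkn : k < n) (hi : 3 ≤ 2 * i + 1) (hd : 2 * i + 1 ≤ d)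
    (F : Type) [Field F] [Fintype F] [DecidableEq F] (hcard : Fintype.card F = q)
    (C : Set (Fin n → F))
    (hsys : Set.BijOn (fun (c : Fin n → F) (j : Fin k) => c (Fin.castLE hkn.le j))
      C Set.univ)
    (hmin : ∀ c ∈ C, ∀ c' ∈ C, c ≠ c' → d ≤ hammingDist c c') :
    ∃ f : {v : Fin k → F // hammingNorm v = i} →
        {u : Fin (n - k) → F // d - i ≤ hammingNorm u},
      Function.Injective f := by
  obtain ⟨f, hf⟩ := exists_injection_of_systematic_general (by omega : 2 * i < d)
    (finSumFinEquiv.trans (finCongr (Nat.add_sub_cancel' hkn.le))) hsys.surjOn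
    fun c hc c' hc' => hmin c hc c' hc'
  exact ⟨_, hf.comp (Subtype.impEmbedding _ _ fun _ hv =>
    ⟨hammingNorm_pos_iff.mp (by omega), hv.le⟩).injective⟩
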